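/- arXiv:1205.5213 — 3 statements merged into one kernel-verified Lean document; each statement's English description precedes it below -/
import Mathlib

section
/- Let A be an additive frieze with first row a : ℤ → ℝ and let n ≥ 2 be an integer. Then row n of the frieze is a row of zeros (i.e., A(r, r+n−1) = 0 for all r ∈ ℤ) if and only if the sum of any n consecutive first-row values equals t_{n−1}, i.e., ∑_{i=r}^{r+n−1} a(i) = t_{n−1} for every r ∈ ℤ. -/
/-- An additive frieze: a map `A` on pairs of integers determined by its first
row `a : ℤ → ℝ` via `A r r = a r`, `A r (r+1) = a r + a (r+1) - 1`, and the
unimodular rule for `s ≥ r + 2`. -/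
def IsAdditiveFrieze (A : ℤ → ℤ → ℝ) (a : ℤ → ℝ) : Prop :=
  (∀ r : ℤ, A r r = a r) ∧
  (∀ r : ℤ, A r (r + 1) = a r + a (r + 1) - 1) ∧
  (∀ r s : ℤ, r + 2 ≤ s → A r s = A r (s - 1) + A (r + 1) s - A (r + 1) (s - 1) - 1)

/-- The `m`-th triangular number `m (m + 1) / 2`, as a real number. -/
noncomputable def tri (m : ℤ) : ℝ := (m : ℝ) * ((m : ℝ) + 1) / 2

/-!
Along each diagonal, the rule says that the increment `A r (s + 1) - A r s` drops by one each time
`r` moves one step away from `s`. It equals `a (s + 1) - 1` at `r = s`, hence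
`a (s + 1) - (s - r + 1)` for all `r ≤ s`. Summing these increments from `A r r = a r` gives the
closed form `A r s = ∑ i ∈ Icc r s, a i - t_{s-r}`.
-/

theorem tri_zero : tri 0 = 0 := by
  simp [tri]

theorem tri_add_one (m : ℤ) : tri (m + 1) = tri m + (m + 1) := by
  simp only [tri]
  push_cast
  ring

theorem sum_Icc_add_one_right {M : Type*} [AddCommMonoid M] (f : ℤ → M) {r s : ℤ}
    (h : r ≤ s + 1) : ∑ i ∈ Finset.Icc r (s + 1), f i = ∑ i ∈ Finset.Icc r s, f i + f (s + 1) := by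
  rw [← Finset.insert_Icc_right_eq_Icc_add_one h, Finset.sum_insert (by simp), add_comm]

namespace IsAdditiveFrieze

variable {A : ℤ → ℤ → ℝ} {a : ℤ → ℝ} {r s : ℤ}

theorem apply_self (hA : IsAdditiveFrieze A a) (r : ℤ) : A r r = a r :=
  hA.1 r

theorem apply_self_add_one (hA : IsAdditiveFrieze A a) (r : ℤ) :
    A r (r + 1) = a r + a (r + 1) - 1 :=
  hA.2.1 r

theorem apply_sub_one_add_one_sub_apply (hA : IsAdditiveFrieze A a) (h : r ≤ s) :
    A (r - 1) (s + 1) - A (r - 1) s = A r (s + 1) - A r s - 1 := by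
  have hrule := hA.2.2 (r - 1) (s + 1) (by lia)
  rw [add_sub_cancel_right, sub_add_cancel] at hrule
  linarith

theorem apply_add_one_sub_apply (hA : IsAdditiveFrieze A a) (h : r ≤ s) :
    A r (s + 1) - A r s = a (s + 1) - (s - r + 1) := by
  induction r, h using Int.leInductionDown with
  | base =>
    rw [hA.apply_self_add_one, hA.apply_self]
    ring
  | pred r h ih =>
    rw [hA.apply_sub_one_add_one_sub_apply h, ih]
    push_cast
    ring

theorem apply_eq_sum_Icc_sub_tri (hA : IsAdditiveFrieze A a) (h : r ≤ s) :
    A r s = ∑ i ∈ Finset.Icc r s, a i - tri (s - r) := by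
  induction s, h using Int.leInduction with
  | base => simp [hA.apply_self, tri_zero]
  | succ s h ih =>
    calc A r (s + 1)
      _ = A r s + (a (s + 1) - (s - r + 1)) := by rw [← hA.apply_add_one_sub_apply h]; ring
      _ = (∑ i ∈ Finset.Icc r s, a i + a (s + 1)) - (tri (s - r) + ((s - r : ℤ) + 1)) := by
        rw [ih]
        push_cast
        ring
      _ = ∑ i ∈ Finset.Icc r (s + 1), a i - tri (s + 1 - r) := by
        rw [sum_Icc_add_one_right a (by lia), ← tri_add_one, add_sub_right_comm s 1 r]

end IsAdditiveFrieze

/-- Row `n` of an additive frieze is a row of zeros iff the sum of any `n`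
consecutive first-row values equals `t_{n-1}`. -/
theorem frieze_row_zero_iff_consecutive_sums
    (A : ℤ → ℤ → ℝ) (a : ℤ → ℝ) (hA : IsAdditiveFrieze A a)
    (n : ℤ) (hn : 2 ≤ n) :
    (∀ r : ℤ, A r (r + n - 1) = 0) ↔
      (∀ r : ℤ, (∑ i ∈ Finset.Icc r (r + n - 1), a i) = tri (n - 1)) := by
  refine forall_congr' fun r ↦ ?_
  have hlength : r + n - 1 - r = n - 1 := by ring
  rw [hA.apply_eq_sum_Icc_sub_tri (by lia), hlength, sub_eq_zero]
end

section
/- Let A be an additive frieze with first row a : ℤ → ℝ and let n ≥ 2 be an integer. Suppose row n of the frieze is a row of zeros (A(r, r+n−1) = 0 for all r ∈ ℤ), and suppose the frieze admits a slice of zeros: there exist integers p_0, p_1, …, p_{n−2} with p_{j+1} = p_j or p_{j+1} = p_j − 1 for each 0 ≤ j ≤ n−3, such that A(p_j, p_j + j) = 0 for every 0 ≤ j ≤ n−2. Then every entry A(r,s) with 0 ≤ s − r ≤ n−1 is a nonnegative integer. -/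
namespace IsAdditiveFrieze

variable {A : ℤ → ℤ → ℝ} {a : ℤ → ℝ}

theorem apply_add_one_right (hA : IsAdditiveFrieze A a) {r s : ℤ} (hrs : r ≤ s) :
    A r (s + 1) = A r s + a (s + 1) - (s + 1 - r) := by
  obtain ⟨row_one, row_two, rule⟩ := hA
  induction r, hrs using Int.leInductionDown with
  | base => rw [row_one, row_two]; ring
  | pred r hrs ih =>
    have diamond := rule (r - 1) (s + 1) (by lia)
    rw [sub_add_cancel, add_sub_cancel_right] at diamond
    push_cast
    linarith

theorem apply_eq_add_apply_add_one_left (hA : IsAdditiveFrieze A a) {r s : ℤ} (hrs : r < s) :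
    A r s = a r + A (r + 1) s - (s - r) := by
  obtain ⟨row_one, row_two, rule⟩ := hA
  induction s, Int.add_one_le_of_lt hrs using Int.leInduction with
  | base => rw [row_one, row_two]; push_cast; ring
  | succ s hrs ih =>
    have diamond := rule r (s + 1) (by lia)
    rw [add_sub_cancel_right] at diamond
    push_cast
    linarith [ih (by lia)]

theorem apply_eq_sum_sub_tri (hA : IsAdditiveFrieze A a) {r s : ℤ} (hrs : r ≤ s) :
    A r s = ∑ i ∈ Finset.Icc r s, a i - tri (s - r) := by
  induction s, hrs using Int.leInduction with
  | base => simp [hA.1, tri]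
  | succ s hrs ih =>
    rw [hA.apply_add_one_right hrs, ih, ← Finset.insert_Icc_right_eq_Icc_add_one (by lia),
      Finset.sum_insert (by simp), add_sub_right_comm s 1 r, tri_add_one]
    push_cast
    ring

theorem firstRow_add_one_eq_of_eq_zero (hA : IsAdditiveFrieze A a) {r s : ℤ} (hrs : r ≤ s)
    (hzero : A r s = 0) (hzero' : A r (s + 1) = 0) : a (s + 1) = (s + 1 - r : ℤ) := by
  have hright := hA.apply_add_one_right hrs
  push_cast
  linarith

theorem firstRow_sub_one_eq_of_eq_zero (hA : IsAdditiveFrieze A a) {r s : ℤ} (hrs : r ≤ s)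
    (hzero : A r s = 0) (hzero' : A (r - 1) s = 0) : a (r - 1) = (s + 1 - r : ℤ) := by
  have hleft := hA.apply_eq_add_apply_add_one_left (r := r - 1) (s := s) (by lia)
  rw [sub_add_cancel] at hleft
  push_cast at hleft ⊢
  linarith

theorem periodic_of_row_eq_zero (hA : IsAdditiveFrieze A a) {n : ℤ} (hn : 1 ≤ n)
    (hrow : ∀ r, A r (r + n - 1) = 0) : Function.Periodic a n := by
  intro r
  have hright := hA.apply_add_one_right (r := r) (s := r + n - 1) (by lia)
  have hleft := hA.apply_eq_add_apply_add_one_left (r := r) (s := r + n) (by lia)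
  have hnext := hrow (r + 1)
  rw [sub_add_cancel, hrow r] at hright
  rw [show r + 1 + n - 1 = r + n by ring] at hnext
  push_cast at hright hleft
  linarith

end IsAdditiveFrieze

theorem map_insert_val_of_notMem {α β : Type*} [DecidableEq α] {x : α} {s : Finset α} (hx : x ∉ s)
    (f : α → β) : (insert x s).val.map f = f x ::ₘ s.val.map f := by
  rw [Finset.insert_val_of_notMem hx, Multiset.map_cons]

theorem map_val_Ico_add_eq_of_periodic {α : Type*} {a : ℤ → α} {n : ℤ} (ha : Function.Periodic a n)
    (hn : 0 ≤ n) (r r' : ℤ) :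
    (Finset.Ico r (r + n)).val.map a = (Finset.Ico r' (r' + n)).val.map a := by
  have hshift : Function.Periodic (fun r ↦ (Finset.Ico r (r + n)).val.map a) 1 := by
    intro r
    have hcons : a r ::ₘ (Finset.Ico (r + 1) (r + 1 + n)).val.map a =
        a (r + n) ::ₘ (Finset.Ico r (r + n)).val.map a := by
      rw [← map_insert_val_of_notMem (by simp), ← map_insert_val_of_notMem (by simp),
        add_right_comm, Finset.insert_Ico_add_one_left_eq_Ico (by lia),
        Finset.insert_Ico_right_eq_Ico_add_one (by lia)]
    rwa [ha, Multiset.cons_inj_right] at hcons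
  simpa using (hshift.int_mul_eq r).trans (hshift.int_mul_eq r').symm

theorem exists_le_map_eq_of_le_map {α β : Type*} {f : α → β} {s : Multiset β} {t : Multiset α}
    (h : s ≤ t.map f) : ∃ u ≤ t, u.map f = s := by
  induction s using Multiset.induction_on generalizing t with
  | empty => exact ⟨0, t.zero_le, Multiset.map_zero f⟩
  | cons b s ih =>
    obtain ⟨x, hx, rfl⟩ := Multiset.mem_map.1 (Multiset.mem_of_le h (Multiset.mem_cons_self b s))
    obtain ⟨t, rfl⟩ := Multiset.exists_cons_of_mem hx
    rw [Multiset.map_cons, Multiset.cons_le_cons_iff] at h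
    obtain ⟨u, hut, rfl⟩ := ih h
    exact ⟨x ::ₘ u, (Multiset.cons_le_cons_iff x).2 hut, Multiset.map_cons f x u⟩

theorem sum_range_cast_eq_tri (k : ℕ) : ∑ i ∈ Finset.range k, (i : ℝ) = tri (k - 1) := by
  induction k with
  | zero => simp [tri]
  | succ k ih =>
    rw [Finset.sum_range_succ, ih, show ((k + 1 : ℕ) : ℤ) - 1 = k - 1 + 1 by push_cast; ring,
      tri_add_one]
    push_cast
    ring

theorem exists_nat_sum_eq_add_tri_card {T : Finset ℤ} (hT : ∀ x ∈ T, 0 ≤ x) :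
    ∃ m : ℕ, ∑ x ∈ T, (x : ℝ) = m + tri (T.card - 1) := by
  have hle : ∑ i ∈ Finset.range T.card, (i : ℤ) ≤ ∑ x ∈ T, x := by
    simpa only [zero_add] using Finset.sum_range_le_sum hT
  obtain ⟨m, hm⟩ := Int.le.dest hle
  refine ⟨m, ?_⟩
  rw [← sum_range_cast_eq_tri, ← Int.cast_sum, ← hm]
  push_cast
  ring

/-- The values of `a` on the integer interval `[r, s)` are a rearrangement of `0, …, s - r - 1`,
stated as an equality of multisets so that repeated values count. -/
def IsPermutationOnIco {R : Type*} [IntCast R] (a : ℤ → R) (r s : ℤ) : Prop :=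
  (Finset.Ico r s).val.map a = (Finset.Ico 0 (s - r)).val.map ((↑) : ℤ → R)

theorem isPermutationOnIco_self {R : Type*} [IntCast R] (a : ℤ → R) (r : ℤ) :
    IsPermutationOnIco a r r := by
  simp [IsPermutationOnIco]

namespace IsPermutationOnIco

variable {R : Type*} [IntCast R] {a : ℤ → R} {r s : ℤ}

theorem add_one_right (h : IsPermutationOnIco a r s) (hrs : r ≤ s) (hs : a s = (s - r : ℤ)) :
    IsPermutationOnIco a r (s + 1) := by
  rw [IsPermutationOnIco, ← Finset.insert_Ico_right_eq_Ico_add_one hrs, add_sub_right_comm,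
    ← Finset.insert_Ico_right_eq_Ico_add_one (by lia : 0 ≤ s - r),
    map_insert_val_of_notMem (by simp), map_insert_val_of_notMem (by simp), h, hs]

theorem sub_one_left (h : IsPermutationOnIco a r s) (hrs : r ≤ s)
    (hr : a (r - 1) = (s - r : ℤ)) : IsPermutationOnIco a (r - 1) s := by
  rw [IsPermutationOnIco, ← Finset.insert_Ico_left_eq_Ico_sub_one hrs,
    show s - (r - 1) = s - r + 1 by ring,
    ← Finset.insert_Ico_right_eq_Ico_add_one (by lia : 0 ≤ s - r),
    map_insert_val_of_notMem (by simp), map_insert_val_of_notMem (by simp), h, hr]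

theorem of_periodic {n : ℤ} (h : IsPermutationOnIco a r (r + n)) (ha : Function.Periodic a n)
    (hn : 0 ≤ n) (r' : ℤ) : IsPermutationOnIco a r' (r' + n) := by
  rw [IsPermutationOnIco, add_sub_cancel_left] at h ⊢
  rw [map_val_Ico_add_eq_of_periodic ha hn r' r, h]

theorem exists_nat_sum_eq_add_tri {a : ℤ → ℝ} {t : ℤ}
    (h : IsPermutationOnIco a r t) (hrs : r ≤ s) (hst : s < t) :
    ∃ m : ℕ, ∑ i ∈ Finset.Icc r s, a i = m + tri (s - r) := by
  have hle : (Finset.Icc r s).val.map a ≤ (Finset.Ico 0 (t - r)).val.map ((↑) : ℤ → ℝ) :=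
    h ▸ Multiset.map_le_map (Finset.val_le_iff.2 (Finset.Icc_subset_Ico_right hst))
  obtain ⟨u, hu, hmap⟩ := exists_le_map_eq_of_le_map hle
  lift u to Finset ℤ using Multiset.nodup_of_le hu (Finset.nodup _)
  have hnonneg : ∀ x ∈ u, 0 ≤ x := fun x hx ↦
    (Finset.mem_Ico.1 (Finset.val_le_iff.1 hu hx)).1
  have hcard : (u.card : ℤ) = s + 1 - r := by
    have hcardMap := congrArg Multiset.card hmap
    simp only [Multiset.card_map, Finset.card_val, Int.card_Icc] at hcardMap
    lia
  have hsum : ∑ i ∈ Finset.Icc r s, a i = ∑ x ∈ u, (x : ℝ) := congrArg Multiset.sum hmap.symm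
  obtain ⟨m, hm⟩ := exists_nat_sum_eq_add_tri_card hnonneg
  exact ⟨m, by rw [hsum, hm, hcard, sub_right_comm, add_sub_cancel_right]⟩

end IsPermutationOnIco

theorem IsAdditiveFrieze.isPermutationOnIco_of_zero_slice {A : ℤ → ℤ → ℝ} {a : ℤ → ℝ}
    (hA : IsAdditiveFrieze A a) {p : ℤ → ℤ} {k : ℤ} (hk : 0 ≤ k)
    (hadj : ∀ j, 0 ≤ j → j < k → p (j + 1) = p j ∨ p (j + 1) = p j - 1)
    (hzero : ∀ j, 0 ≤ j → j ≤ k → A (p j) (p j + j) = 0) :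
    IsPermutationOnIco a (p k) (p k + k + 1) := by
  induction k, hk using Int.leInduction with
  | base =>
    have hstart : a (p 0) = 0 := by simpa [hA.1] using hzero 0
    simpa using (isPermutationOnIco_self a (p 0)).add_one_right le_rfl (by simpa using hstart)
  | succ k hk ih =>
    have hperm := ih (fun j h0 hj ↦ hadj j h0 (by lia)) (fun j h0 hj ↦ hzero j h0 (by lia))
    have hupper := hzero k hk (by lia)
    have hlower := hzero (k + 1) (by lia) le_rfl
    rcases hadj k hk (by lia) with hp | hp <;> rw [hp] at hlower ⊢
    · rw [← add_assoc] at hlower ⊢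
      exact hperm.add_one_right (by lia)
        (hA.firstRow_add_one_eq_of_eq_zero (by lia) hupper hlower)
    · rw [sub_add_add_cancel] at hlower ⊢
      exact hperm.sub_one_left (by lia)
        (hA.firstRow_sub_one_eq_of_eq_zero (by lia) hupper hlower)

/-- If an additive frieze with `n + 1` rows admits a slice of zeros, then all
its entries are nonnegative integers. -/
theorem frieze_nonneg_integers_of_zero_slice
    (A : ℤ → ℤ → ℝ) (a : ℤ → ℝ) (hA : IsAdditiveFrieze A a)
    (n : ℤ) (hn : 2 ≤ n)
    (hrow : ∀ r : ℤ, A r (r + n - 1) = 0)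
    (p : ℤ → ℤ)
    (hadj : ∀ j : ℤ, 0 ≤ j → j ≤ n - 3 → p (j + 1) = p j ∨ p (j + 1) = p j - 1)
    (hzero : ∀ j : ℤ, 0 ≤ j → j ≤ n - 2 → A (p j) (p j + j) = 0) :
    ∀ r s : ℤ, 0 ≤ s - r → s - r ≤ n - 1 → ∃ m : ℕ, A r s = (m : ℝ) := by
  have hslice : IsPermutationOnIco a (p (n - 2)) (p (n - 2) + (n - 2) + 1) :=
    hA.isPermutationOnIco_of_zero_slice (by lia) (fun j h0 hj ↦ hadj j h0 (by lia)) hzero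
  have hbottom : A (p (n - 2)) (p (n - 2) + (n - 2) + 1) = 0 := by
    convert hrow (p (n - 2)) using 2
    ring
  have hperm : IsPermutationOnIco a (p (n - 2)) (p (n - 2) + n) := by
    convert hslice.add_one_right (by lia)
      (hA.firstRow_add_one_eq_of_eq_zero (by lia) (hzero (n - 2) (by lia) le_rfl) hbottom) using 1
    ring
  intro r s hrs hsr
  have hperiodic := hA.periodic_of_row_eq_zero (by lia) hrow
  obtain ⟨m, hm⟩ := (hperm.of_periodic hperiodic (by lia) r).exists_nat_sum_eq_add_tri
    (s := s) (by lia) (by lia)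
  exact ⟨m, by rw [hA.apply_eq_sum_sub_tri (by lia), hm, add_sub_cancel_right]⟩
end

section
/- Let n ≥ 3 be an integer and let a : ℤ → ℝ be (n−1)-periodic with ∑_{i=r}^{r+n−2} a(i) = t_{n−2} for every r ∈ ℤ, and suppose moreover that every a(i) is an integer and that ∑_{i=r}^{r+s} a(i) ≥ t_s for every r ∈ ℤ and every 0 ≤ s ≤ n−2 (so the additive frieze with n rows determined by a consists of nonnegative integers). Define b : ℤ → ℝ to be the n-periodic function with b(0) = n−1 and b(i) = a(i−1) for 1 ≤ i ≤ n−1. Then every b(i) is an integer and ∑_{i=r}^{r+s} b(i) ≥ t_s for every r ∈ ℤ and every 0 ≤ s ≤ n−1; consequently the additive frieze with n+1 rows determined by b consists of nonnegative integers. -/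
/-!
By the unimodular rule, `A r s - A (r + 1) s` drops by `1` whenever `s` grows by `1`; telescoping
gives `A r s = ∑ i ∈ [r, s], a i - tri (s - r)`, so everything reduces to sums over windows. The
inserted values sit at the multiples of `n`. A window of at most `n` consecutive entries of `b`
contains at most one of them, and deleting it leaves a window of consecutive entries of `a`, since
the two remaining pieces abut by periodicity. If the window has `s + 1` entries, the inserted value
`v ≥ n - 1 ≥ s` pays for the increment `tri s - tri (s - 1) = s`.
-/

theorem tri_eq_tri_sub_one_add (k : ℤ) : tri k = tri (k - 1) + k := by
  simp only [tri]
  push_cast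
  ring

theorem exists_intCast_eq_tri (k : ℤ) : ∃ m : ℤ, tri k = m := by
  obtain ⟨m, hm⟩ := Int.even_mul_succ_self k
  have hm' : (k : ℝ) * (k + 1) = m + m := by exact_mod_cast hm
  exact ⟨m, by rw [tri, hm', add_self_div_two]⟩

namespace IsAdditiveFrieze

variable {A : ℤ → ℤ → ℝ} {a : ℤ → ℝ} {r s : ℤ}

theorem sub_apply_add_one_left (h : IsAdditiveFrieze A a) (hrs : r + 1 ≤ s) :
    A r s - A (r + 1) s = a r - (s - r) := by
  obtain ⟨hdiag, hsecond, hrule⟩ := h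
  induction s, hrs using Int.leInduction with
  | base =>
    rw [hsecond, hdiag]
    push_cast
    ring
  | succ s hs ih =>
    have hnext := hrule r (s + 1) (by omega)
    rw [add_sub_cancel_right] at hnext
    push_cast
    linarith

theorem eq_sum_sub_tri (h : IsAdditiveFrieze A a) (hrs : r ≤ s) :
    A r s = ∑ i ∈ Finset.Icc r s, a i - tri (s - r) := by
  induction r, hrs using Int.leInductionDown with
  | base => simp [h.1, tri]
  | pred r hr ih =>
    have hstep := h.sub_apply_add_one_left (r := r - 1) (s := s) (by omega)
    have htri := tri_eq_tri_sub_one_add (s - (r - 1))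
    rw [show s - (r - 1) - 1 = s - r by ring] at htri
    rw [← Finset.add_sum_Ioc_eq_sum_Icc (by omega), ← Finset.Icc_add_one_left_eq_Ioc, htri]
    rw [sub_add_cancel] at hstep ⊢
    push_cast at hstep ⊢
    linarith

theorem exists_natCast_eq (h : IsAdditiveFrieze A a) (hrs : r ≤ s)
    (hint : ∀ i, ∃ m : ℤ, a i = m) (hge : tri (s - r) ≤ ∑ i ∈ Finset.Icc r s, a i) :
    ∃ m : ℕ, A r s = m := by
  have hentry := h.eq_sum_sub_tri hrs
  choose α hα using hint
  obtain ⟨t, ht⟩ := exists_intCast_eq_tri (s - r)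
  have hcast : A r s = (∑ i ∈ Finset.Icc r s, α i - t : ℤ) := by
    rw [hentry, ht]
    push_cast
    simp only [hα]
  have hnonneg : 0 ≤ ∑ i ∈ Finset.Icc r s, α i - t := by
    rw [← Int.cast_nonneg_iff (R := ℝ), ← hcast, hentry]
    exact sub_nonneg.2 hge
  obtain ⟨m, hm⟩ := Int.eq_ofNat_of_zero_le hnonneg
  exact ⟨m, by rw [hcast, hm, Int.cast_natCast]⟩

end IsAdditiveFrieze

theorem sum_Ico_add_sum_Ico {α M : Type*} [LinearOrder α] [LocallyFiniteOrder α]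
    [AddCommMonoid M] (f : α → M) {x y z : α} (hxy : x ≤ y) (hyz : y ≤ z) :
    ∑ i ∈ Finset.Ico x y, f i + ∑ i ∈ Finset.Ico y z, f i = ∑ i ∈ Finset.Ico x z, f i := by
  rw [← Finset.Ico_union_Ico_eq_Ico hxy hyz,
    Finset.sum_union (Finset.Ico_disjoint_Ico_consecutive x y z)]

/-- The `n`-periodic sequence `b` arises from the `(n - 1)`-periodic sequence `a` by inserting one
value `v` into each period. The inserted values are placed at the multiples of `n`, so `a 0` is
moved to index `1`. -/
structure IsPeriodicInsertion {M : Type*} (n : ℤ) (v : M) (a b : ℤ → M) : Prop where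
  periodic_left : Function.Periodic a (n - 1)
  periodic_right : Function.Periodic b n
  apply_zero : b 0 = v
  apply_of_mem_period : ∀ i, 1 ≤ i → i ≤ n - 1 → b i = a (i - 1)

namespace IsPeriodicInsertion

section Values

variable {M : Type*} {n : ℤ} {v : M} {a b : ℤ → M}

theorem apply_mul (h : IsPeriodicInsertion n v a b) (k : ℤ) : b (k * n) = v :=
  (h.periodic_right.int_mul_eq k).trans h.apply_zero

theorem apply_of_between (h : IsPeriodicInsertion n v a b) {i k : ℤ} (hki : k * n < i)
    (hik : i < (k + 1) * n) : b i = a (i - 1 - k) := by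
  calc b i = b (i - k * n) := (h.periodic_right.sub_int_mul_eq k).symm
    _ = a (i - k * n - 1) := h.apply_of_mem_period _ (by linarith) (by linarith)
    _ = a (i - 1 - k - k * (n - 1)) := by ring_nf
    _ = a (i - 1 - k) := h.periodic_left.sub_int_mul_eq k

theorem apply_eq_or_exists (h : IsPeriodicInsertion n v a b) (hn : 0 < n) (i : ℤ) :
    b i = v ∨ ∃ j, b i = a j := by
  rcases (Int.ediv_mul_le i hn.ne').eq_or_lt with hi | hi
  · exact .inl (hi ▸ h.apply_mul _)
  · exact .inr ⟨_, h.apply_of_between hi (Int.lt_ediv_add_one_mul_self i hn)⟩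

end Values

section Sums

variable {M : Type*} [AddCommMonoid M] {n : ℤ} {v : M} {a b : ℤ → M}

theorem sum_Ico_of_between (h : IsPeriodicInsertion n v a b) {k r t : ℤ} (hr : k * n < r)
    (ht : t ≤ (k + 1) * n) :
    ∑ i ∈ Finset.Ico r t, b i = ∑ i ∈ Finset.Ico (r - 1 - k) (t - 1 - k), a i := by
  have hb : ∀ i ∈ Finset.Ico r t, b i = a (i + (-1 - k)) := fun i hi => by
    rw [Finset.mem_Ico] at hi
    rw [h.apply_of_between (hr.trans_le hi.1) (hi.2.trans_le ht)]
    ring_nf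
  rw [Finset.sum_congr rfl hb, Finset.sum_Ico_add']
  ring_nf

theorem sum_Ico_of_mem (h : IsPeriodicInsertion n v a b) {k r t : ℤ} (hr : (k - 1) * n < r)
    (hrk : r ≤ k * n) (hkt : k * n < t) (ht : t ≤ (k + 1) * n) :
    ∑ i ∈ Finset.Ico r t, b i = v + ∑ i ∈ Finset.Ico (r - k) (t - 1 - k), a i := by
  have hbefore : ∑ i ∈ Finset.Ico r (k * n), b i = ∑ i ∈ Finset.Ico (r - k) (k * n - k), a i := by
    rw [h.sum_Ico_of_between hr (by rw [sub_add_cancel])]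
    ring_nf
  have hafter : ∑ i ∈ Finset.Ico (k * n + 1) t, b i =
      ∑ i ∈ Finset.Ico (k * n - k) (t - 1 - k), a i := by
    rw [h.sum_Ico_of_between (lt_add_one _) ht, add_sub_cancel_right]
  calc ∑ i ∈ Finset.Ico r t, b i
      = ∑ i ∈ Finset.Ico r (k * n), b i + (b (k * n) + ∑ i ∈ Finset.Ico (k * n + 1) t, b i) := by
        rw [Finset.Ico_add_one_left_eq_Ioo, Finset.add_sum_Ioo_eq_sum_Ico hkt,
          sum_Ico_add_sum_Ico b hrk hkt.le]
    _ = v + (∑ i ∈ Finset.Ico (r - k) (k * n - k), a i +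
          ∑ i ∈ Finset.Ico (k * n - k) (t - 1 - k), a i) := by
        rw [hbefore, hafter, h.apply_mul, add_left_comm]
    _ = v + ∑ i ∈ Finset.Ico (r - k) (t - 1 - k), a i := by
        rw [sum_Ico_add_sum_Ico a (by omega) (by omega)]

theorem exists_sum_Icc_eq (h : IsPeriodicInsertion n v a b) {s : ℤ} (hs : 0 ≤ s)
    (hsn : s ≤ n - 1) (r : ℤ) :
    (s ≤ n - 2 ∧ ∃ q, ∑ i ∈ Finset.Icc r (r + s), b i = ∑ i ∈ Finset.Icc q (q + s), a i) ∨
      ∃ q, ∑ i ∈ Finset.Icc r (r + s), b i = v + ∑ i ∈ Finset.Ico q (q + s), a i := by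
  have hn : 0 < n := by omega
  obtain ⟨k, hk, hk'⟩ : ∃ k, k * n ≤ r + s ∧ r + s < (k + 1) * n :=
    ⟨_, Int.ediv_mul_le _ hn.ne', Int.lt_ediv_add_one_mul_self _ hn⟩
  simp only [← Finset.Ico_add_one_right_eq_Icc]
  rcases lt_or_ge (k * n) r with hr | hr
  · refine .inl ⟨by linarith, r - 1 - k, ?_⟩
    rw [h.sum_Ico_of_between hr hk']
    ring_nf
  · refine .inr ⟨r - k, ?_⟩
    rw [h.sum_Ico_of_mem (by linarith) hr (Int.lt_add_one_of_le hk) hk']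
    ring_nf

end Sums

variable {n : ℤ} {a b : ℤ → ℝ}

theorem exists_intCast_eq {v : ℤ} (h : IsPeriodicInsertion n (v : ℝ) a b)
    (hn : 0 < n) (ha : ∀ i, ∃ m : ℤ, a i = m) (i : ℤ) : ∃ m : ℤ, b i = m := by
  rcases h.apply_eq_or_exists hn i with hi | ⟨j, hj⟩
  · exact ⟨v, hi⟩
  · exact hj ▸ ha j

theorem tri_le_sum_Icc {v : ℝ} (h : IsPeriodicInsertion n v a b) (hv : n - 1 ≤ v)
    (ha : ∀ r s : ℤ, 0 ≤ s → s ≤ n - 2 → tri s ≤ ∑ i ∈ Finset.Icc r (r + s), a i)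
    (r s : ℤ) (hs : 0 ≤ s) (hsn : s ≤ n - 1) : tri s ≤ ∑ i ∈ Finset.Icc r (r + s), b i := by
  rcases h.exists_sum_Icc_eq hs hsn r with ⟨hsn', q, hq⟩ | ⟨q, hq⟩
  · exact hq ▸ ha q s hs hsn'
  · have hrest : tri (s - 1) ≤ ∑ i ∈ Finset.Ico q (q + s), a i := by
      rcases hs.eq_or_lt with rfl | hpos
      · simp [tri]
      · rw [← Finset.Icc_sub_one_right_eq_Ico, add_sub_assoc]
        exact ha q (s - 1) (by omega) (by omega)
    have hsv : (s : ℝ) ≤ v := le_trans (by exact_mod_cast hsn) hv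
    rw [hq, tri_eq_tri_sub_one_add]
    linarith

end IsPeriodicInsertion

theorem insert_row_value_preserves_nonneg_integers_general {n v : ℤ} {a b : ℤ → ℝ} (hn : 0 < n)
    (hv : n - 1 ≤ v) (hab : IsPeriodicInsertion n (v : ℝ) a b)
    (haint : ∀ i : ℤ, ∃ m : ℤ, a i = (m : ℝ))
    (hage : ∀ r s : ℤ, 0 ≤ s → s ≤ n - 2 → tri s ≤ ∑ i ∈ Finset.Icc r (r + s), a i) :
    (∀ i : ℤ, ∃ m : ℤ, b i = (m : ℝ)) ∧
      (∀ r s : ℤ, 0 ≤ s → s ≤ n - 1 → tri s ≤ ∑ i ∈ Finset.Icc r (r + s), b i) ∧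
      (∀ B : ℤ → ℤ → ℝ, IsAdditiveFrieze B b →
        ∀ r s : ℤ, 0 ≤ s - r → s - r ≤ n - 1 → ∃ m : ℕ, B r s = (m : ℝ)) := by
  have hbint := hab.exists_intCast_eq hn haint
  have hbge := hab.tri_le_sum_Icc (by exact_mod_cast hv) hage
  refine ⟨hbint, hbge, fun B hB r s hrs hsn => ?_⟩
  have hwindow := hbge r (s - r) hrs hsn
  rw [add_sub_cancel] at hwindow
  exact hB.exists_natCast_eq (sub_nonneg.1 hrs) hbint hwindow

/-- Inserting the value `n - 1` into each period of the first row of an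
additive frieze with `n` rows consisting of nonnegative integers yields the
first row of an additive frieze with `n + 1` rows consisting of nonnegative
integers. -/
theorem insert_row_value_preserves_nonneg_integers
    (n : ℤ) (hn : 3 ≤ n) (a : ℤ → ℝ)
    (haper : ∀ k : ℤ, a (k + (n - 1)) = a k)
    (hasum : ∀ r : ℤ, (∑ i ∈ Finset.Icc r (r + n - 2), a i) = tri (n - 2))
    (haint : ∀ i : ℤ, ∃ m : ℤ, a i = (m : ℝ))
    (hage : ∀ r s : ℤ, 0 ≤ s → s ≤ n - 2 →
      tri s ≤ ∑ i ∈ Finset.Icc r (r + s), a i)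
    (b : ℤ → ℝ)
    (hbper : ∀ k : ℤ, b (k + n) = b k)
    (hb0 : b 0 = ((n : ℝ) - 1))
    (hbi : ∀ i : ℤ, 1 ≤ i → i ≤ n - 1 → b i = a (i - 1)) :
    (∀ i : ℤ, ∃ m : ℤ, b i = (m : ℝ)) ∧
      (∀ r s : ℤ, 0 ≤ s → s ≤ n - 1 →
        tri s ≤ ∑ i ∈ Finset.Icc r (r + s), b i) ∧
      (∀ B : ℤ → ℤ → ℝ, IsAdditiveFrieze B b →
        ∀ r s : ℤ, 0 ≤ s - r → s - r ≤ n - 1 → ∃ m : ℕ, B r s = (m : ℝ)) := by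
  exact insert_row_value_preserves_nonneg_integers_general (v := n - 1) (by omega) le_rfl
    ⟨haper, hbper, by exact_mod_cast hb0, hbi⟩ haint hage
end
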